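/- Let S be an ordered semigroup with real multiplication satisfying axioms O1–O6 and having a countable dense subset. Then every pair of elements f, g ∈ S has a greatest lower bound f ∧ g in S. -/

import Mathlib

open scoped ENNReal

/-- `CC s t` : `s` is (sequentially) compactly contained in `t`, written `s ≪ t`. -/
def CC {S : Type*} [AddCommMonoid S] [PartialOrder S] (s t : S) : Prop :=
  ∀ u : ℕ → S, Monotone u → ∀ x : S, IsLUB (Set.range u) x → t ≤ x → ∃ n, s ≤ u n

/-- An ordered semigroup (positive, with translation invariant order) satisfying axioms O1-O5. -/
structure CuO5 (S : Type*) [AddCommMonoid S] [PartialOrder S] : Prop where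
  addRightMono : ∀ {s t : S}, s ≤ t → ∀ r : S, s + r ≤ t + r
  zeroLe : ∀ s : S, 0 ≤ s
  O1 : ∀ u : ℕ → S, Monotone u → ∃ x : S, IsLUB (Set.range u) x
  O2 : ∀ s : S, ∃ u : ℕ → S, (∀ n, CC (u n) (u (n + 1))) ∧ IsLUB (Set.range u) s
  O3 : ∀ {s₁ t₁ s₂ t₂ : S}, CC s₁ t₁ → CC s₂ t₂ → CC (s₁ + s₂) (t₁ + t₂)
  O4 : ∀ u v : ℕ → S, Monotone u → Monotone v → ∀ x y : S,
    IsLUB (Set.range u) x → IsLUB (Set.range v) y →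
    IsLUB (Set.range fun n => u n + v n) (x + y)
  O5 : ∀ {s' s t : S}, CC s' s → s ≤ t → ∃ r : S, s' + r ≤ t ∧ t ≤ s + r

/-- Axioms O1-O6. -/
structure CuO6 (S : Type*) [AddCommMonoid S] [PartialOrder S] extends CuO5 S : Prop where
  O6 : ∀ {s r t : S}, s ≤ r + t → ∀ {s' : S}, CC s' s →
    ∃ r' t' : S, s' ≤ r' + t' ∧ r' ≤ r ∧ r' ≤ s ∧ t' ≤ t ∧ t' ≤ s

/-- A functional on `S`: additive, order preserving, zero preserving map to `[0,∞]`
preserving suprema of increasing sequences. -/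
structure IsFunctional {S : Type*} [AddCommMonoid S] [PartialOrder S] (l : S → ℝ≥0∞) : Prop where
  map_zero : l 0 = 0
  map_add : ∀ s t : S, l (s + t) = l s + l t
  mono : ∀ {s t : S}, s ≤ t → l s ≤ l t
  map_sup : ∀ u : ℕ → S, Monotone u → ∀ x : S, IsLUB (Set.range u) x → l x = ⨆ n, l (u n)

/-- Real multiplication on `S` : a map `(0,∞] × S → S` additive, order preserving and
sup-(of increasing sequences)-preserving in each variable, with `1 · s = s`.
Scalars are elements of `ℝ≥0∞` required to be positive. -/
structure RealMul (S : Type*) [AddCommMonoid S] [PartialOrder S] where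
  smul : ℝ≥0∞ → S → S
  add_left : ∀ {a b : ℝ≥0∞}, 0 < a → 0 < b → ∀ s : S, smul (a + b) s = smul a s + smul b s
  add_right : ∀ {a : ℝ≥0∞}, 0 < a → ∀ s t : S, smul a (s + t) = smul a s + smul a t
  mono_left : ∀ {a b : ℝ≥0∞}, 0 < a → a ≤ b → ∀ s : S, smul a s ≤ smul b s
  mono_right : ∀ {a : ℝ≥0∞}, 0 < a → ∀ {s t : S}, s ≤ t → smul a s ≤ smul a t
  sup_left : ∀ u : ℕ → ℝ≥0∞, Monotone u → 0 < u 0 → ∀ s : S,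
    IsLUB (Set.range fun n => smul (u n) s) (smul (⨆ n, u n) s)
  sup_right : ∀ {a : ℝ≥0∞}, 0 < a → ∀ u : ℕ → S, Monotone u → ∀ x : S,
    IsLUB (Set.range u) x → IsLUB (Set.range fun n => smul a (u n)) (smul a x)
  one_smul : ∀ s : S, smul 1 s = s

/-- `D` is a dense subset of `S`: every element of `S` is the supremum of a rapidly
increasing sequence of elements of `D`. -/
def IsDenseSub {S : Type*} [AddCommMonoid S] [PartialOrder S] (D : Set S) : Prop :=
  ∀ s : S, ∃ u : ℕ → S, (∀ n, u n ∈ D) ∧ (∀ n, CC (u n) (u (n + 1))) ∧ IsLUB (Set.range u) s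

/-- `m` is the least upper bound of the functionals `l₁` and `l₂` in `F(S)`
(pointwise order). -/
def IsFSup {S : Type*} [AddCommMonoid S] [PartialOrder S] (l₁ l₂ m : S → ℝ≥0∞) : Prop :=
  IsFunctional m ∧ (∀ s, l₁ s ≤ m s) ∧ (∀ s, l₂ s ≤ m s) ∧
    ∀ d : S → ℝ≥0∞, IsFunctional d → (∀ s, l₁ s ≤ d s) → (∀ s, l₂ s ≤ d s) → ∀ s, m s ≤ d s

/-- `m` is the greatest lower bound of the functionals `l₁` and `l₂` in `F(S)`
(pointwise order). -/
def IsFInf {S : Type*} [AddCommMonoid S] [PartialOrder S] (l₁ l₂ m : S → ℝ≥0∞) : Prop :=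
  IsFunctional m ∧ (∀ s, m s ≤ l₁ s) ∧ (∀ s, m s ≤ l₂ s) ∧
    ∀ d : S → ℝ≥0∞, IsFunctional d → (∀ s, d s ≤ l₁ s) → (∀ s, d s ≤ l₂ s) → ∀ s, d s ≤ m s

/-- An isomorphism of ordered semigroups between `S` and the extended natural numbers. -/
def IsOrdSemigroupIso {S : Type*} [AddCommMonoid S] [PartialOrder S] (e : S ≃ ℕ∞) : Prop :=
  (∀ a b : S, e (a + b) = e a + e b) ∧ e 0 = 0 ∧ ∀ a b : S, a ≤ b ↔ e a ≤ e b

/-!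
Scaling by `n⁻¹` turns an inequality that holds up to an error independent of `n` into an exact one:
in the presence of real multiplication, `s ≪ t` gives `(n + c) • s ≤ n • t` for all large `n`. For
the same reason `s + r ≤ t + r` implies `s ≤ t` as soon as `r` is dominated by a multiple of `t`.
With this cancellation, (O5) provides complements and (O6) decompositions that are precise enough to
interpolate: elements `h₁, h₂ ≤ f, g` and `h₁' ≪ h₁`, `h₂' ≪ h₂` admit `h ≤ f, g` with
`h₁', h₂' ≤ h`. Here `h - h₁'` plays the role of the positive part
`(h₂ - h₁)⁺ = ((f - h₁) - (f - h₂))⁺`. Hence the elements compactly contained in a common lower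
bound of `f` and `g` form a directed set, whose supremum exists by countability and is `f ∧ g`.
-/

theorem exists_monotone_seq_of_directedOn {α : Type*} [Preorder α] {s : Set α}
    (hs : DirectedOn (· ≤ ·) s) (hne : s.Nonempty) (hc : s.Countable) :
    ∃ u : ℕ → α, Monotone u ∧ (∀ n, u n ∈ s) ∧ ∀ a ∈ s, ∃ n, a ≤ u n := by
  have := hne.to_subtype
  have := hc.to_subtype
  have : IsDirectedOrder s := ⟨directedOn_iff_directed.1 hs⟩
  obtain ⟨u, hu, hu_top⟩ := Filter.exists_seq_monotone_tendsto_atTop_atTop s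
  exact ⟨fun n => u n, hu, fun n => (u n).2,
    fun a ha => (hu_top.eventually_ge_atTop ⟨a, ha⟩).exists⟩

theorem nsmul_add_le_nsmul_add {M : Type*} [AddCommMonoid M] [PartialOrder M]
    [IsOrderedAddMonoid M] {s t r : M} (h : s + r ≤ t + r) (n : ℕ) :
    n • s + r ≤ n • t + r := by
  induction n with
  | zero => simp
  | succ n ih =>
    calc (n + 1) • s + r = n • s + (s + r) := by rw [succ_nsmul, add_assoc]
      _ ≤ n • s + (t + r) := by gcongr
      _ = (n • s + r) + t := by abel
      _ ≤ (n • t + r) + t := by gcongr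
      _ = (n + 1) • t + r := by rw [succ_nsmul, add_right_comm]

open Filter in
theorem eventually_natCast_add_mul_le {a : ℝ≥0∞} (ha : a < 1) (c : ℕ) :
    ∀ᶠ n : ℕ in atTop, ((n + c : ℕ) : ℝ≥0∞) * a ≤ n := by
  lift a to NNReal using ha.ne_top
  have ha' : 0 < 1 - (a : ℝ) := sub_pos.2 (by exact_mod_cast ha)
  filter_upwards [tendsto_natCast_atTop_atTop.eventually_ge_atTop (c * a / (1 - a : ℝ))] with n hn
  have h : ((n + c : ℕ) : ℝ) * a ≤ n := by
    push_cast
    linarith [(div_le_iff₀ ha').1 hn]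
  exact_mod_cast h

section CuntzSemigroup

variable {S : Type*} [AddCommMonoid S] [PartialOrder S]

local infix:50 " ≪ " => CC

theorem CC.le {s t : S} (h : s ≪ t) : s ≤ t :=
  let ⟨_, hn⟩ := h (fun _ => t) monotone_const t (by simp) le_rfl
  hn

theorem CC.trans_le {s t r : S} (hst : s ≪ t) (htr : t ≤ r) : s ≪ r :=
  fun u hu x hx hrx => hst u hu x hx (htr.trans hrx)

theorem cc_of_le_of_cc {s t r : S} (hst : s ≤ t) (htr : t ≪ r) : s ≪ r := fun u hu x hx hrx =>
  let ⟨n, hn⟩ := htr u hu x hx hrx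
  ⟨n, hst.trans hn⟩

theorem monotone_of_cc_succ {u : ℕ → S} (hu : ∀ n, u n ≪ u (n + 1)) : Monotone u :=
  monotone_nat_of_le_succ fun n => (hu n).le

theorem cc_of_isLUB_of_cc_succ {u : ℕ → S} (hu : ∀ n, u n ≪ u (n + 1)) {x : S}
    (hx : IsLUB (Set.range u) x) (n : ℕ) : u n ≪ x :=
  (hu n).trans_le (hx.1 ⟨n + 1, rfl⟩)

namespace IsDenseSub

variable {D : Set S}

theorem exists_mem_cc_cc (hD : IsDenseSub D) {a b t : S} (ha : a ≪ t) (hb : b ≪ t) :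
    ∃ r ∈ D, a ≪ r ∧ b ≪ r ∧ r ≪ t := by
  obtain ⟨u, huD, hu, ht⟩ := hD t
  have hmono := monotone_of_cc_succ hu
  obtain ⟨i, hi⟩ := ha u hmono t ht le_rfl
  obtain ⟨j, hj⟩ := hb u hmono t ht le_rfl
  exact ⟨u (max i j + 1), huD _,
    cc_of_le_of_cc (hi.trans (hmono (le_max_left i j))) (hu _),
    cc_of_le_of_cc (hj.trans (hmono (le_max_right i j))) (hu _), cc_of_isLUB_of_cc_succ hu ht _⟩

theorem le_of_forall_cc_le (hD : IsDenseSub D) {s t : S} (h : ∀ d ∈ D, d ≪ s → d ≤ t) :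
    s ≤ t := by
  obtain ⟨u, huD, hu, hs⟩ := hD s
  exact hs.2 (Set.forall_mem_range.2 fun n => h _ (huD n) (cc_of_isLUB_of_cc_succ hu hs n))

end IsDenseSub

namespace CuO5

theorem isOrderedAddMonoid (hS : CuO5 S) : IsOrderedAddMonoid S where
  add_le_add_left _ _ h c := hS.addRightMono h c

theorem isBotZeroClass (hS : CuO5 S) : IsBotZeroClass S where
  isBot_zero := hS.zeroLe

theorem isDenseSub_univ (hS : CuO5 S) : IsDenseSub (Set.univ : Set S) := fun s =>
  let ⟨u, hu, hs⟩ := hS.O2 s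
  ⟨u, fun _ => Set.mem_univ _, hu, hs⟩

theorem zero_cc (hS : CuO5 S) (t : S) : 0 ≪ t := fun u _ _ _ _ => ⟨0, hS.zeroLe (u 0)⟩

theorem nsmul_cc_nsmul (hS : CuO5 S) {s t : S} (h : s ≪ t) (n : ℕ) : n • s ≪ n • t := by
  induction n with
  | zero => simpa only [zero_nsmul] using hS.zero_cc 0
  | succ n ih => simpa only [succ_nsmul] using hS.O3 ih h

theorem exists_cc_between (hS : CuO5 S) {s t : S} (h : s ≪ t) : ∃ r, s ≪ r ∧ r ≪ t :=
  let ⟨r, _, hsr, _, hrt⟩ := hS.isDenseSub_univ.exists_mem_cc_cc h h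
  ⟨r, hsr, hrt⟩

theorem exists_isLUB_of_directedOn (hS : CuO5 S) {D : Set S} (hDc : D.Countable)
    (hD : IsDenseSub D) {A : Set S} (hA : DirectedOn (· ≤ ·) A) (hne : A.Nonempty) :
    ∃ x, IsLUB A x := by
  let B : Set S := {d ∈ D | ∃ a ∈ A, d ≪ a}
  have hB_dir : DirectedOn (· ≤ ·) B := by
    rintro d ⟨-, a, ha, hda⟩ e ⟨-, b, hb, heb⟩
    obtain ⟨c, hc, hac, hbc⟩ := hA a ha b hb
    obtain ⟨r, hrD, hdr, her, hrc⟩ := hD.exists_mem_cc_cc (hda.trans_le hac) (heb.trans_le hbc)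
    exact ⟨r, ⟨hrD, c, hc, hrc⟩, hdr.le, her.le⟩
  have hB_ne : B.Nonempty := by
    obtain ⟨a, ha⟩ := hne
    obtain ⟨r, hrD, -, -, hra⟩ := hD.exists_mem_cc_cc (hS.zero_cc a) (hS.zero_cc a)
    exact ⟨r, hrD, a, ha, hra⟩
  obtain ⟨u, hu, huB, hBu⟩ :=
    exists_monotone_seq_of_directedOn hB_dir hB_ne (hDc.mono (Set.sep_subset D _))
  obtain ⟨x, hx⟩ := hS.O1 u hu
  refine ⟨x, fun a ha => hD.le_of_forall_cc_le fun d hdD hda => ?_, fun y hy => hx.2 ?_⟩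
  · obtain ⟨n, hn⟩ := hBu d ⟨hdD, a, ha, hda⟩
    exact hn.trans (hx.1 ⟨n, rfl⟩)
  · rintro _ ⟨n, rfl⟩
    obtain ⟨-, a, ha, hua⟩ := huB n
    exact hua.le.trans (hy ha)

theorem exists_cc_le_add (hS : CuO5 S) {s t a b : S} (h : s ≪ t) (htab : t ≤ a + b) :
    ∃ b', b' ≪ b ∧ s ≤ a + b' := by
  have := hS.isOrderedAddMonoid
  obtain ⟨u, hu, hb⟩ := hS.O2 b
  have hmono := monotone_of_cc_succ hu
  obtain ⟨n, hn⟩ := h (fun n => a + u n) (monotone_const.add hmono) (a + b)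
    (hS.O4 (fun _ => a) u monotone_const hmono a b (by simp) hb) htab
  exact ⟨u n, cc_of_isLUB_of_cc_succ hu hb n, hn⟩

-- `k' = r₁ + ⋯ + rₙ` and `k = r₂ + ⋯ + rₙ + h` for a chain `h' ≪ r₁ ≪ ⋯ ≪ rₙ ≪ h`.
theorem exists_cc_nsmul_between_le_add (hS : CuO5 S) {h' h : S} (hh : h' ≪ h) (n : ℕ) :
    ∃ k' k, n • h' ≤ k' ∧ k' ≪ k ∧ k ≤ n • h ∧ k ≤ k' + h := by
  have := hS.isOrderedAddMonoid
  induction n generalizing h with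
  | zero => exact ⟨0, 0, by simp, hS.zero_cc 0, by simp, by simpa using hS.zeroLe h⟩
  | succ n ih =>
    obtain ⟨r, hr, hrh⟩ := hS.exists_cc_between hh
    obtain ⟨k', k, hk', hkk, hk, hkk'⟩ := ih hr
    refine ⟨k' + r, k + h, ?_, hS.O3 hkk hrh, ?_, by gcongr⟩
    · rw [succ_nsmul]
      gcongr
      exact hr.le
    · rw [succ_nsmul]
      gcongr
      exact hk.trans (nsmul_le_nsmul_right hrh.le n)

end CuO5

namespace RealMul

theorem nsmul_smul (rm : RealMul S) {a : ℝ≥0∞} (ha : 0 < a) (s : S) {n : ℕ} (hn : 0 < n) :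
    n • rm.smul a s = rm.smul (n * a) s := by
  induction n, hn using Nat.le_induction with
  | base => simp
  | succ n hn ih =>
    have hna : 0 < (n : ℝ≥0∞) * a := ENNReal.mul_pos (Nat.cast_ne_zero.2 (by lia)) ha.ne'
    rw [succ_nsmul, ih, ← rm.add_left hna ha, Nat.cast_succ, add_one_mul]

theorem smul_nsmul (rm : RealMul S) {a : ℝ≥0∞} (ha : 0 < a) (s : S) {n : ℕ} (hn : 0 < n) :
    rm.smul a (n • s) = n • rm.smul a s := by
  induction n, hn using Nat.le_induction with
  | base => simp
  | succ n hn ih => rw [succ_nsmul, rm.add_right ha, ih, ← succ_nsmul]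

theorem nsmul_inv_smul (rm : RealMul S) (s : S) {n : ℕ} (hn : 0 < n) :
    n • rm.smul (n : ℝ≥0∞)⁻¹ s = s := by
  rw [rm.nsmul_smul (by simp) s hn,
    ENNReal.mul_inv_cancel (by exact_mod_cast hn.ne') (ENNReal.natCast_ne_top n), rm.one_smul]

theorem le_of_nsmul_le_nsmul (rm : RealMul S) {s t : S} {n : ℕ} (hn : 0 < n)
    (h : n • s ≤ n • t) : s ≤ t := by
  have hpos : 0 < (n : ℝ≥0∞)⁻¹ := ENNReal.inv_pos.2 (ENNReal.natCast_ne_top n)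
  simpa only [rm.smul_nsmul hpos _ hn, rm.nsmul_inv_smul _ hn] using rm.mono_right hpos h

theorem exists_le_smul_of_cc (rm : RealMul S) {s t : S} (h : s ≪ t) :
    ∃ a, 0 < a ∧ a < 1 ∧ s ≤ rm.smul a t := by
  obtain ⟨u, hu, hu_mem, hu_lim⟩ := exists_seq_strictMono_tendsto' (zero_lt_one (α := ℝ≥0∞))
  have hsup : ⨆ n, u n = 1 := iSup_eq_of_tendsto hu.monotone hu_lim
  obtain ⟨n, hn⟩ := h (fun n => rm.smul (u n) t)
    (fun i j hij => rm.mono_left (hu_mem i).1 (hu.monotone hij) t) _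
    (rm.sup_left u hu.monotone (hu_mem 0).1 t) (by rw [hsup, rm.one_smul])
  exact ⟨u n, (hu_mem n).1, (hu_mem n).2, hn⟩

open Filter in
theorem eventually_add_nsmul_le_nsmul [IsOrderedAddMonoid S] (rm : RealMul S) {s t : S}
    (h : s ≪ t) (c : ℕ) : ∀ᶠ n : ℕ in atTop, (n + c) • s ≤ n • t := by
  obtain ⟨a, ha₀, ha₁, hsa⟩ := rm.exists_le_smul_of_cc h
  filter_upwards [eventually_natCast_add_mul_le ha₁ c, eventually_gt_atTop 0] with n hn hn₀
  have hnc : 0 < ((n + c : ℕ) : ℝ≥0∞) := by exact_mod_cast hn₀.trans_le (Nat.le_add_right n c)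
  calc (n + c) • s ≤ (n + c) • rm.smul a t := by gcongr
    _ = rm.smul ((n + c : ℕ) * a) t := rm.nsmul_smul ha₀ t (by lia)
    _ ≤ rm.smul (n * 1) t := rm.mono_left (ENNReal.mul_pos hnc.ne' ha₀.ne') (by simpa using hn) t
    _ = n • t := by rw [← rm.nsmul_smul one_pos t hn₀, rm.one_smul]

theorem le_of_add_le_add_of_le_nsmul (rm : RealMul S) (hS : CuO5 S) {s t r : S} {N : ℕ}
    (h : s + r ≤ t + r) (hr : r ≤ N • t) : s ≤ t := by
  have := hS.isOrderedAddMonoid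
  have := hS.isBotZeroClass
  refine hS.isDenseSub_univ.le_of_forall_cc_le fun s' _ hs' => ?_
  obtain ⟨n, hn, hn₀⟩ := ((rm.eventually_add_nsmul_le_nsmul hs' N).and
    (Filter.eventually_gt_atTop 0)).exists
  refine rm.le_of_nsmul_le_nsmul (n := n + N) (by lia) ?_
  calc (n + N) • s' ≤ n • s := hn
    _ ≤ n • s + r := le_add_of_nonneg_right zero_le
    _ ≤ n • t + r := nsmul_add_le_nsmul_add h n
    _ ≤ n • t + N • t := by gcongr
    _ = (n + N) • t := (add_nsmul t n N).symm

theorem exists_interpolant_of_forall_nsmul [IsOrderedAddMonoid S] (rm : RealMul S)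
    {h₁' h₁ h₂' h₂ f g : S} (hh₁ : h₁' ≪ h₁) (hh₂ : h₂' ≪ h₂) (c : ℕ)
    (h_approx : ∀ n : ℕ, ∃ h, n • h₁ ≤ h ∧ n • h₂ ≤ h ∧ h ≤ (n + c) • f ∧ h ≤ (n + c) • g) :
    ∃ h, h₁' ≤ h ∧ h₂' ≤ h ∧ h ≤ f ∧ h ≤ g := by
  obtain ⟨n, ⟨hn₁, hn₂⟩, hn₀⟩ := (((rm.eventually_add_nsmul_le_nsmul hh₁ c).and
    (rm.eventually_add_nsmul_le_nsmul hh₂ c)).and (Filter.eventually_gt_atTop 0)).exists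
  have hnc : 0 < n + c := by lia
  obtain ⟨k, hk₁, hk₂, hkf, hkg⟩ := h_approx n
  rw [← rm.nsmul_inv_smul k hnc] at hk₁ hk₂ hkf hkg
  exact ⟨_, rm.le_of_nsmul_le_nsmul hnc (hn₁.trans hk₁),
    rm.le_of_nsmul_le_nsmul hnc (hn₂.trans hk₂), rm.le_of_nsmul_le_nsmul hnc hkf,
    rm.le_of_nsmul_le_nsmul hnc hkg⟩

end RealMul

namespace CuO6

theorem exists_approx_interpolant_le_add (hS : CuO6 S) {h₁' h₁ h₂' h₂ f e : S}
    (hh₁ : h₁' ≪ h₁) (he₁ : h₁ ≤ h₁' + e) (hh₂ : h₂' ≪ h₂) (h₁f : h₁ ≤ f) (h₂f : h₂ ≤ f) :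
    ∃ h, h₁' ≤ h ∧ h₂' ≤ h + e ∧ h ≤ f ∧ h ≤ h₁ + h₂ := by
  have := hS.isOrderedAddMonoid
  have := hS.isBotZeroClass
  obtain ⟨x, hx, hx'⟩ := hS.O5 hh₁ h₁f
  obtain ⟨a, b, hab, ha, -, hbx, hb⟩ := hS.O6 (h₂f.trans hx') hh₂
  refine ⟨h₁' + b, le_add_of_nonneg_right zero_le, ?_, ?_, ?_⟩
  · calc h₂' ≤ a + b := hab
      _ ≤ h₁' + e + b := by gcongr; exact ha.trans he₁
      _ = h₁' + b + e := add_right_comm ..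
  · exact le_trans (by gcongr) hx
  · gcongr
    exact hh₁.le

theorem exists_interpolant_le_add (hS : CuO6 S) (rm : RealMul S) {h₁' h₁ h₂' h₂ f : S}
    (hh₁ : h₁' ≪ h₁) (hh₂ : h₂' ≪ h₂) (h₁f : h₁ ≤ f) (h₂f : h₂ ≤ f) :
    ∃ h, h₁' ≤ h ∧ h₂' ≤ h ∧ h ≤ f ∧ h ≤ h₁ + h₂ := by
  have := hS.isOrderedAddMonoid
  have := hS.isBotZeroClass
  obtain ⟨k₁, hk₁', hk₁⟩ := hS.exists_cc_between hh₁
  obtain ⟨k₂, hk₂', hk₂⟩ := hS.exists_cc_between hh₂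
  refine rm.exists_interpolant_of_forall_nsmul hk₁' hk₂' 1 fun n => ?_
  obtain ⟨p', p, hp', hpp, hp, hpe⟩ := hS.exists_cc_nsmul_between_le_add hk₁ n
  obtain ⟨h, hph, hkh, hhf, hhp⟩ := hS.exists_approx_interpolant_le_add hpp hpe
    (hS.nsmul_cc_nsmul hk₂ n) (hp.trans (by gcongr)) (nsmul_le_nsmul_right h₂f n)
  refine ⟨h + h₁, (hp'.trans hph).trans (le_add_of_nonneg_right zero_le), hkh, ?_, ?_⟩
  · rw [succ_nsmul]
    gcongr
  · calc h + h₁ ≤ n • h₁ + n • h₂ + h₁ := by gcongr; exact hhp.trans (by gcongr)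
      _ = n • (h₁ + h₂) + h₁ := by rw [nsmul_add]
      _ ≤ n • (h₁ + h₂) + (h₁ + h₂) := by gcongr; exact le_add_of_nonneg_right zero_le
      _ = (n + 1) • (h₁ + h₂) := (succ_nsmul ..).symm

-- With complements `x = f - h₁`, `y = f - h₂` and `p = g - h₁`, the part `v` of `x` that (O6) finds
-- under `p` is `(x - y)⁺ = (h₂ - h₁)⁺` up to errors `e`.
theorem exists_approx_interpolant (hS : CuO6 S) (rm : RealMul S)
    {h₁' h₁ h₂' h₂ f' f g e : S} {N : ℕ} (hh₁ : h₁' ≪ h₁) (he₁ : h₁ ≤ h₁' + e) (hh₂ : h₂' ≪ h₂)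
    (hf : f' ≪ f) (hfe : f ≤ f' + e) (hfN : f ≤ N • e) (h₁f : h₁ ≤ f) (h₂f : h₂ ≤ f)
    (h₁g : h₁ ≤ g) (h₂g : h₂ ≤ g) :
    ∃ h, h₁' ≤ h ∧ h₂' ≤ h + 2 • e ∧ h ≤ f ∧ h ≤ g + e := by
  have := hS.isOrderedAddMonoid
  have := hS.isBotZeroClass
  obtain ⟨x, hx, hx'⟩ := hS.O5 hh₁ h₁f
  obtain ⟨y, hy, hy'⟩ := hS.O5 hh₂ h₂f
  obtain ⟨p, hp, hp'⟩ := hS.O5 hh₁ h₁g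
  have hxyp : x ≤ y + (p + e) := by
    refine rm.le_of_add_le_add_of_le_nsmul hS.toCuO5 (r := h₁') (N := N) ?_ ?_
    · calc x + h₁' = h₁' + x := add_comm ..
        _ ≤ h₂ + y := hx.trans hy'
        _ ≤ h₁' + e + p + y := by gcongr; exact h₂g.trans (hp'.trans (by gcongr))
        _ = y + (p + e) + h₁' := by abel
    · refine (hh₁.le.trans (h₁f.trans hfN)).trans (nsmul_le_nsmul_right ?_ N)
      rw [← add_assoc]
      exact le_add_of_nonneg_left zero_le
  obtain ⟨x', hx'x, hfx'⟩ := hS.exists_cc_le_add hf hx'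
  obtain ⟨u, v, huv, huy, hux, hvp, hvx⟩ := hS.O6 hxyp hx'x
  refine ⟨h₁' + v, le_add_of_nonneg_right zero_le, ?_, le_trans (by gcongr) hx, ?_⟩
  · refine rm.le_of_add_le_add_of_le_nsmul hS.toCuO5 (r := u) (N := N) ?_ ?_
    · calc h₂' + u ≤ h₂' + y := by gcongr
        _ ≤ f' + e := hy.trans hfe
        _ ≤ h₁ + x' + e := by gcongr
        _ ≤ h₁' + e + (u + v) + e := by gcongr
        _ = h₁' + v + 2 • e + u := by rw [two_nsmul]; abel
    · have hxf : x ≤ f := (le_add_of_nonneg_left zero_le).trans hx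
      refine (hux.trans (hxf.trans hfN)).trans (nsmul_le_nsmul_right ?_ N)
      rw [two_nsmul, ← add_assoc]
      exact le_add_of_nonneg_left zero_le
  · calc h₁' + v ≤ h₁' + (p + e) := by gcongr
      _ = h₁' + p + e := (add_assoc ..).symm
      _ ≤ g + e := by gcongr

theorem exists_interpolant_of_le_nsmul (hS : CuO6 S) (rm : RealMul S)
    {h₁' h₁ h₂' h₂ f g : S} {c : ℕ} (hh₁ : h₁' ≪ h₁) (hh₂ : h₂' ≪ h₂) (h₁f : h₁ ≤ f)
    (h₂f : h₂ ≤ f) (h₁g : h₁ ≤ g) (h₂g : h₂ ≤ g) (hfg : f ≤ c • g) :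
    ∃ h, h₁' ≤ h ∧ h₂' ≤ h ∧ h ≤ f ∧ h ≤ g := by
  have := hS.isOrderedAddMonoid
  have := hS.isBotZeroClass
  obtain ⟨k₁, hk₁', hk₁⟩ := hS.exists_cc_between hh₁
  obtain ⟨k₂, hk₂', hk₂⟩ := hS.exists_cc_between hh₂
  obtain ⟨l₁, hkl₁, hl₁⟩ := hS.exists_cc_between hk₁
  obtain ⟨l₂, hkl₂, hl₂⟩ := hS.exists_cc_between hk₂
  obtain ⟨r, -, hlr₁, hlr₂, hrf⟩ :=
    hS.isDenseSub_univ.exists_mem_cc_cc (hl₁.trans_le h₁f) (hl₂.trans_le h₂f)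
  refine rm.exists_interpolant_of_forall_nsmul hk₁' hk₂' (2 + 3 * c) fun n => ?_
  obtain ⟨q', q, hq', hqq, hq, hqe⟩ := hS.exists_cc_nsmul_between_le_add hrf n
  obtain ⟨p', p, hp', hpp, hp, hpe⟩ := hS.exists_cc_nsmul_between_le_add hkl₁ n
  have hrq : n • r ≤ q := hq'.trans hqq.le
  obtain ⟨h, hph, hkh, hhq, hhg⟩ := hS.exists_approx_interpolant rm (g := n • g) hpp
    (hpe.trans (by gcongr; exact hl₁.le.trans h₁f)) (hS.nsmul_cc_nsmul hkl₂ n) hqq hqe hq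
    ((hp.trans (nsmul_le_nsmul_right hlr₁.le n)).trans hrq)
    ((nsmul_le_nsmul_right hlr₂.le n).trans hrq)
    (hp.trans (nsmul_le_nsmul_right (hl₁.le.trans h₁g) n))
    (nsmul_le_nsmul_right (hl₂.le.trans h₂g) n)
  refine ⟨h + 2 • f, (hp'.trans hph).trans (le_add_of_nonneg_right zero_le), hkh, ?_, ?_⟩
  · calc h + 2 • f ≤ n • f + 2 • f := by gcongr; exact hhq.trans hq
      _ = (n + 2) • f := (add_nsmul ..).symm
      _ ≤ (n + (2 + 3 * c)) • f := nsmul_le_nsmul_left zero_le (by lia)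
  · calc h + 2 • f ≤ n • g + f + 2 • f := by gcongr
      _ = n • g + 3 • f := by abel
      _ ≤ n • g + 3 • c • g := by gcongr
      _ = (n + 3 * c) • g := by rw [add_nsmul, mul_nsmul']
      _ ≤ (n + (2 + 3 * c)) • g := nsmul_le_nsmul_left zero_le (by lia)

theorem exists_interpolant (hS : CuO6 S) (rm : RealMul S) {h₁' h₁ h₂' h₂ f g : S}
    (hh₁ : h₁' ≪ h₁) (hh₂ : h₂' ≪ h₂) (h₁f : h₁ ≤ f) (h₂f : h₂ ≤ f) (h₁g : h₁ ≤ g)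
    (h₂g : h₂ ≤ g) : ∃ h, h₁' ≤ h ∧ h₂' ≤ h ∧ h ≤ f ∧ h ≤ g := by
  have := hS.isOrderedAddMonoid
  obtain ⟨k₁, hk₁', hk₁⟩ := hS.exists_cc_between hh₁
  obtain ⟨k₂, hk₂', hk₂⟩ := hS.exists_cc_between hh₂
  obtain ⟨r, hkr₁, hkr₂, hrf, hr⟩ := hS.exists_interpolant_le_add rm hk₁ hk₂ h₁f h₂f
  have hrg : r ≤ 2 • g := hr.trans (by rw [two_nsmul]; gcongr)
  obtain ⟨h, h₁h, h₂h, hhr, hhg⟩ := hS.exists_interpolant_of_le_nsmul rm hk₁' hk₂' hkr₁ hkr₂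
    (hk₁.le.trans h₁g) (hk₂.le.trans h₂g) hrg
  exact ⟨h, h₁h, h₂h, hhr.trans hrf, hhg⟩

end CuO6

/-- The elements compactly contained in some lower bound of `T`; their supremum is the natural
candidate for the infimum of `T`. -/
def ccLowerBounds (T : Set S) : Set S :=
  {h | ∃ k ∈ lowerBounds T, h ≪ k}

theorem CuO5.zero_mem_ccLowerBounds (hS : CuO5 S) (T : Set S) : 0 ∈ ccLowerBounds T :=
  ⟨0, fun t _ => hS.zeroLe t, hS.zero_cc 0⟩

theorem CuO5.isGLB_of_isLUB_ccLowerBounds (hS : CuO5 S) {T : Set S} {m : S}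
    (hm : IsLUB (ccLowerBounds T) m) : IsGLB T m := by
  refine ⟨fun t ht => hm.2 ?_, fun z hz => ?_⟩
  · rintro h ⟨k, hk, hhk⟩
    exact hhk.le.trans (hk ht)
  · exact hS.isDenseSub_univ.le_of_forall_cc_le fun d _ hdz => hm.1 ⟨z, hz, hdz⟩

theorem CuO6.directedOn_ccLowerBounds_pair (hS : CuO6 S) (rm : RealMul S) (f g : S) :
    DirectedOn (· ≤ ·) (ccLowerBounds {f, g}) := by
  have hmem (z : S) : z ∈ lowerBounds {f, g} ↔ z ≤ f ∧ z ≤ g := by simp [lowerBounds_insert]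
  rintro a ⟨s, hs, has⟩ b ⟨t, ht, hbt⟩
  obtain ⟨hsf, hsg⟩ := (hmem s).1 hs
  obtain ⟨htf, htg⟩ := (hmem t).1 ht
  obtain ⟨a', haa', ha's⟩ := hS.exists_cc_between has
  obtain ⟨b', hbb', hb't⟩ := hS.exists_cc_between hbt
  obtain ⟨h, hah, hbh, hhf, hhg⟩ := hS.exists_interpolant rm ha's hb't hsf htf hsg htg
  obtain ⟨r, -, har, hbr, hrh⟩ :=
    hS.isDenseSub_univ.exists_mem_cc_cc (haa'.trans_le hah) (hbb'.trans_le hbh)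
  exact ⟨r, ⟨h, (hmem h).2 ⟨hhf, hhg⟩, hrh⟩, har.le, hbr.le⟩

end CuntzSemigroup

/-- existence of greatest lower bounds. -/
theorem exists_inf {S : Type*} [AddCommMonoid S] [PartialOrder S]
    (hS : CuO6 S) (rm : RealMul S) (hd : ∃ D : Set S, D.Countable ∧ IsDenseSub D)
    (f g : S) :
    ∃ m : S, IsGLB ({f, g} : Set S) m := by
  obtain ⟨D, hDc, hD⟩ := hd
  obtain ⟨m, hm⟩ := hS.exists_isLUB_of_directedOn hDc hD
    (hS.directedOn_ccLowerBounds_pair rm f g) ⟨0, hS.zero_mem_ccLowerBounds _⟩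
  exact ⟨m, hS.isGLB_of_isLUB_ccLowerBounds hm⟩
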